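/- Let f : 𝕆 → 𝕆 be an ℝ-linear map satisfying f(x) = Re f(x) − Σ_{i=1}^{7} eᵢ · Re f(eᵢ x) for all x. Then f is left para-linear, i.e. Re(f(px) − p f(x)) = 0 for all p, x ∈ 𝕆. -/

import Mathlib

/-!
Both `p ↦ Re f(px)` and `p ↦ Re (p f(x))` are real-linear in `p`, so it suffices to compare them on
the basis. Writing `y = f(x)` in coordinates, `Re (p y) = p₀ y₀ - ∑_{i ≥ 1} pᵢ yᵢ`, while the
hypothesis on `f` says exactly that `yᵢ = -Re f(eᵢ x)` for `i ≥ 1`. Hence `Re (p y)` equals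
`∑ᵢ pᵢ Re f(eᵢ x)`, the value of `Re f(px)` obtained by expanding `p` in the basis.
-/

noncomputable section

open Quaternion

/-- The octonions, as the Cayley–Dickson double of the quaternions. -/
def Octo : Type := ℍ × ℍ

namespace Octo

instance : AddCommGroup Octo := inferInstanceAs (AddCommGroup (ℍ × ℍ))
instance : Module ℝ Octo := inferInstanceAs (Module ℝ (ℍ × ℍ))

/-- Cayley–Dickson multiplication: (a,b)(c,d) = (ac − d̄b, da + bc̄). -/
instance : Mul Octo :=
  ⟨fun x y => ((x.1 * y.1 - star y.2 * x.2, y.2 * x.1 + x.2 * star y.1) : ℍ × ℍ)⟩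

/-- Octonionic conjugation. -/
def conj (x : Octo) : Octo := ((star x.1, -x.2) : ℍ × ℍ)

/-- Real part. -/
def re (x : Octo) : ℝ := x.1.re

/-- Squared norm. -/
def normSq (x : Octo) : ℝ := re (x * conj x)

/-- The standard basis e₀ = 1, e₁, …, e₇. -/
def e : Fin 8 → Octo :=
  ![((1, 0) : ℍ × ℍ), ((⟨0,1,0,0⟩, 0) : ℍ × ℍ), ((⟨0,0,1,0⟩, 0) : ℍ × ℍ),
    ((⟨0,0,0,1⟩, 0) : ℍ × ℍ), ((0, 1) : ℍ × ℍ), ((0, ⟨0,1,0,0⟩) : ℍ × ℍ),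
    ((0, ⟨0,0,1,0⟩) : ℍ × ℍ), ((0, ⟨0,0,0,1⟩) : ℍ × ℍ)]

/-- Inverse: p⁻¹ = conj p / |p|². -/
def inv (x : Octo) : Octo := (normSq x)⁻¹ • conj x

/-- The associator [a,b,c] = (ab)c − a(bc). -/
def assoc (a b c : Octo) : Octo := a * b * c - a * (b * c)

/-- Left para-linear map: ℝ-linear with Re(f(px) − p f(x)) = 0. -/
def IsParaLinear (f : Octo → Octo) : Prop :=
  IsLinearMap ℝ f ∧ ∀ p x : Octo, re (f (p * x) - p * f x) = 0

end Octo

namespace Octo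

/-- The coordinates of an octonion in the basis `e`. -/
def coord (x : Octo) : Fin 8 → ℝ :=
  ![x.1.re, x.1.imI, x.1.imJ, x.1.imK, x.2.re, x.2.imI, x.2.imJ, x.2.imK]

lemma coord_add (x y : Octo) : coord (x + y) = coord x + coord y := by
  have h1 : (x + y).1 = x.1 + y.1 := rfl
  have h2 : (x + y).2 = x.2 + y.2 := rfl
  ext i; fin_cases i <;> simp [coord, h1, h2]

lemma coord_smul (r : ℝ) (x : Octo) : coord (r • x) = r • coord x := by
  have h1 : (r • x).1 = r • x.1 := rfl
  have h2 : (r • x).2 = r • x.2 := rfl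
  ext i; fin_cases i <;> simp [coord, h1, h2]

/-- `coord` as a linear map. -/
def coordL : Octo →ₗ[ℝ] (Fin 8 → ℝ) where
  toFun := coord
  map_add' := coord_add
  map_smul' := coord_smul

lemma coord_injective : Function.Injective coord := by
  intro x y h
  have h' := fun i => congrFun h i
  simp only [Fin.forall_fin_succ, coord] at h'
  simp at h'
  obtain ⟨h0, h1, h2, h3, h4, h5, h6, h7⟩ := h'
  exact Prod.ext (QuaternionAlgebra.ext h0 h1 h2 h3) (QuaternionAlgebra.ext h4 h5 h6 h7)

lemma coord_e (i : Fin 8) : coord (e i) = Pi.single i 1 := by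
  ext j
  fin_cases i <;> fin_cases j <;> simp [coord, e]

lemma eq_sum_coord (p : Octo) : p = ∑ i, coord p i • e i := by
  apply coord_injective
  change coordL p = coordL _
  rw [map_sum]
  simp only [map_smul]
  change coord p = ∑ i, coord p i • coord (e i)
  ext j
  simp [coord_e, Pi.single_apply]

/-- Right multiplication by `x` as a linear map. -/
def mulRightL (x : Octo) : Octo →ₗ[ℝ] Octo where
  toFun p := p * x
  map_add' p q := by
    refine Prod.ext ?_ ?_
    · change (p.1 + q.1) * x.1 - star x.2 * (p.2 + q.2)
        = (p.1 * x.1 - star x.2 * p.2) + (q.1 * x.1 - star x.2 * q.2)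
      noncomm_ring
    · change x.2 * (p.1 + q.1) + (p.2 + q.2) * star x.1
        = (x.2 * p.1 + p.2 * star x.1) + (x.2 * q.1 + q.2 * star x.1)
      noncomm_ring
  map_smul' r p := by
    refine Prod.ext ?_ ?_
    · change (r • p.1) * x.1 - star x.2 * (r • p.2) = r • (p.1 * x.1 - star x.2 * p.2)
      rw [smul_mul_assoc, mul_smul_comm, smul_sub]
    · change x.2 * (r • p.1) + (r • p.2) * star x.1 = r • (x.2 * p.1 + p.2 * star x.1)
      rw [smul_mul_assoc, mul_smul_comm, smul_add]

lemma e_zero_mul (x : Octo) : e 0 * x = x := by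
  refine Prod.ext ?_ ?_
  · change (1 : ℍ) * x.1 - star x.2 * 0 = x.1
    simp
  · change x.2 * (1 : ℍ) + 0 * star x.1 = x.2
    simp

lemma re_eq_coord (x : Octo) : re x = coord x 0 := rfl

/-- `Re (p y) = p₀ y₀ - ∑_{i ≥ 1} pᵢ yᵢ`. -/
lemma re_mul (p y : Octo) :
    re (p * y) = coord p 0 * coord y 0 - ∑ i : Fin 7, coord p i.succ * coord y i.succ := by
  change (p.1 * y.1 - star y.2 * p.2).re = _
  simp [Fin.sum_univ_succ, coord]
  ring

lemma re_sub (x y : Octo) : re (x - y) = re x - re y := rfl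

end Octo

open Octo in
theorem stmt9 (f : Octo → Octo) (hlin : IsLinearMap ℝ f)
    (h : ∀ x, f x = Octo.re (f x) • Octo.e 0
      - ∑ i ∈ Finset.Icc (1 : Fin 8) 7, Octo.re (f (Octo.e i * x)) • Octo.e i) :
    ∀ p x : Octo, Octo.re (f (p * x) - p * f x) = 0 := by
  intro p x
  have hIcc : Finset.Icc (1 : Fin 8) 7 = Finset.univ.image Fin.succ := by decide
  have hcoord (i : Fin 7) : coord (f x) i.succ = -re (f (e i.succ * x)) := by
    have h1 := congrArg (fun z => coordL z i.succ) (h x)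
    rw [hIcc, Finset.sum_image (fun _ _ _ _ hab => Fin.succ_injective _ hab)] at h1
    simp only [map_sub, map_sum, map_smul] at h1
    change coord (f x) i.succ
      = (re (f x) • coord (e 0) - ∑ j : Fin 7, re (f (e j.succ * x)) • coord (e j.succ)) i.succ
      at h1
    rw [h1]
    simp [coord_e, Pi.single_apply]
  have hexp : re (f (p * x)) = ∑ i, coord p i * re (f (e i * x)) := by
    let L : Octo →ₗ[ℝ] ℝ := LinearMap.proj 0 ∘ₗ coordL ∘ₗ hlin.mk' f ∘ₗ mulRightL x
    change L p = ∑ i, coord p i * L (e i)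
    conv_lhs => rw [eq_sum_coord p]
    simp only [map_sum, map_smul, smul_eq_mul]
  rw [re_sub, hexp, re_mul, Fin.sum_univ_succ, e_zero_mul, re_eq_coord (f x)]
  simp only [hcoord, mul_neg, Finset.sum_neg_distrib]
  ring
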